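/- Under the stated hypotheses on φ, there exists a real number a > 0 such that (−t)^{1/α − N/(2 k_J)} ‖U(t)‖_{L²(ℝ^N)} → a as t → 0 from the left. -/

import Mathlib

open MeasureTheory Filter

/-!
Put `s = -α t` and `p = q / α` (here `q = 2`), so that `‖U(t)‖_q ^ q = ∫ (s + φ) ^ (-p)`, and let
`K` be the largest order of vanishing of `φ`. Near a zero `x` of order `κ`, the substitution
`y = x + s ^ (1 / K) z` turns `s ^ (p - n / K) ∫ (s + φ) ^ (-p)` into the integral of
`(1 + φ (x + s ^ (1 / K) z) / s) ^ (-p)`. Since `φ` is bounded below by `c ‖y - x‖ ^ K` near `x`,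
this is dominated by `(1 + c ‖z‖ ^ K) ^ (-p)`, which is integrable as `p K > n`. The pointwise limit
is `(1 + η ‖z‖ ^ K) ^ (-p)` if `κ = K`, and `0` if `κ < K`, because then
`φ (x + s ^ (1 / K) z) / s → ∞`. Away from the zeros `φ ^ (-p)` is integrable, so the positive power
`s ^ (p - n / K)` kills the integral. Hence exactly the zeros of maximal order contribute.
-/

open Module Topology Asymptotics
open scoped ENNReal

theorem tendsto_rpow_nhdsGT_zero {a : ℝ} (ha : 0 < a) :
    Tendsto (fun s : ℝ => s ^ a) (𝓝[>] 0) (𝓝 0) := by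
  have h := (Real.continuousAt_rpow_const 0 a (.inr ha.le)).tendsto
  rw [Real.zero_rpow ha.ne'] at h
  exact h.mono_left nhdsWithin_le_nhds

theorem tendsto_const_mul_nhdsLT_zero_nhdsGT_zero {c : ℝ} (hc : c < 0) :
    Tendsto (fun t : ℝ => c * t) (𝓝[<] 0) (𝓝[>] 0) := by
  refine tendsto_nhdsWithin_iff.2 ⟨?_, ?_⟩
  · exact ((continuous_const_mul c).tendsto' 0 0 (mul_zero _)).mono_left nhdsWithin_le_nhds
  · filter_upwards [self_mem_nhdsWithin] with t ht
    exact mul_pos_of_neg_of_neg hc ht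

section MeasureSpace

variable {X : Type*} [MeasurableSpace X] {μ : Measure X} {φ : X → ℝ}

theorem tendsto_rpow_mul_setIntegral_add_rpow_neg {T : Set X} (hT : MeasurableSet T)
    (hφ : ∀ y ∈ T, 0 < φ y) {p q : ℝ} (hp : 0 ≤ p) (hq : 0 < q)
    (hint : IntegrableOn (fun y => φ y ^ (-p)) T μ) :
    Tendsto (fun s : ℝ => s ^ q * ∫ y in T, (s + φ y) ^ (-p) ∂μ) (𝓝[>] 0) (𝓝 0) := by
  have hlim : Tendsto (fun s : ℝ => s ^ q * ∫ y in T, φ y ^ (-p) ∂μ) (𝓝[>] 0) (𝓝 0) := by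
    simpa only [zero_mul] using (tendsto_rpow_nhdsGT_zero hq).mul_const (∫ y in T, φ y ^ (-p) ∂μ)
  refine squeeze_zero' ?_ ?_ hlim
  · filter_upwards [self_mem_nhdsWithin] with s (hs : 0 < s)
    refine mul_nonneg (by positivity) (setIntegral_nonneg hT fun y hy => ?_)
    exact Real.rpow_nonneg (add_pos hs (hφ y hy)).le _
  · filter_upwards [self_mem_nhdsWithin] with s (hs : 0 < s)
    refine mul_le_mul_of_nonneg_left (integral_mono_of_nonneg ?_ hint ?_) (by positivity)
    · filter_upwards [ae_restrict_mem hT] with y hy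
      exact Real.rpow_nonneg (add_pos hs (hφ y hy)).le _
    · filter_upwards [ae_restrict_mem hT] with y hy
      exact Real.rpow_le_rpow_of_nonpos (hφ y hy) (by linarith) (neg_nonpos.2 hp)

theorem toReal_eLpNorm_rpow {f : X → ℝ} (hf : Measurable f) (hf0 : ∀ y, 0 ≤ f y)
    (r : ℝ) {q : ℝ≥0∞} (hq0 : q ≠ 0) (hq : q ≠ ∞) :
    (eLpNorm (fun y => f y ^ r) q μ).toReal = (∫ y, f y ^ (r * q.toReal) ∂μ) ^ q.toReal⁻¹ := by
  have hmeas : AEStronglyMeasurable (fun y => f y ^ r) μ :=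
    (hf.pow_const r).aestronglyMeasurable
  rw [toReal_eLpNorm hmeas, lpNorm_eq_integral_norm_rpow_toReal hq0 hq hmeas]
  congr! 3 with y
  rw [Real.norm_of_nonneg (Real.rpow_nonneg (hf0 y) r), Real.rpow_mul (hf0 y)]

end MeasureSpace

theorem exists_isOpen_pairwise_disjoint_subset {X ι : Type*} [TopologicalSpace X] [T2Space X]
    [Finite ι] {x : ι → X} (hx : Function.Injective x) {V : ι → Set X} (hV : ∀ j, V j ∈ 𝓝 (x j)) :
    ∃ S : ι → Set X, (∀ j, IsOpen (S j) ∧ x j ∈ S j ∧ S j ⊆ V j) ∧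
      Pairwise (Function.onFun Disjoint S) := by
  obtain ⟨S, hS, hdisj⟩ := Pairwise.exists_mem_filter_basis_of_disjoint
    (pairwise_disjoint_nhds.comp_of_injective hx)
    fun j => (nhds_basis_opens (x j)).restrict_subset (hV j)
  exact ⟨S, fun j => ⟨(hS j).1.2, (hS j).1.1, (hS j).2⟩, hdisj⟩

section NormedAddCommGroup

variable {E : Type*} [NormedAddCommGroup E]

theorem isBigO_norm_rpow_of_le_norm_rpow_neg_mul [ProperSpace E] {ν : ℝ} {φ : E → ℝ}
    (hφ : ∃ c > (0 : ℝ), ∃ R : ℝ, ∀ y, R ≤ ‖y‖ → c ≤ ‖y‖ ^ (-ν) * φ y) :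
    (fun y => ‖y‖ ^ ν) =O[cocompact E] φ := by
  obtain ⟨c, hc, R, hR⟩ := hφ
  refine .of_bound c⁻¹ ?_
  filter_upwards [(tendsto_norm_cocompact_atTop (E := E)).eventually_ge_atTop R,
    (tendsto_norm_cocompact_atTop (E := E)).eventually_gt_atTop 0] with y hyR hy0
  have h := hR y hyR
  rw [Real.rpow_neg hy0.le, inv_mul_eq_div, le_div_iff₀ (by positivity)] at h
  rw [Real.norm_of_nonneg (by positivity), inv_mul_eq_div, le_div_iff₀ hc, mul_comm]
  exact h.trans (Real.le_norm_self _)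

theorem tendsto_norm_rpow_neg_mul_atTop {κ K η : ℝ} {f : E → ℝ} (hκ : κ < K) (hη : 0 < η)
    (hf : Tendsto (fun y => ‖y‖ ^ (-κ) * f y) (𝓝[≠] 0) (𝓝 η)) :
    Tendsto (fun y => ‖y‖ ^ (-K) * f y) (𝓝[≠] 0) atTop := by
  have hpow : Tendsto (fun y : E => ‖y‖ ^ (κ - K)) (𝓝[≠] 0) atTop :=
    (tendsto_rpow_neg_nhdsGT_zero (sub_neg.2 hκ)).comp tendsto_norm_nhdsNE_zero
  refine (hpow.atTop_mul_pos hη hf).congr' ?_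
  filter_upwards [self_mem_nhdsWithin] with y hy
  rw [← mul_assoc, ← Real.rpow_add (norm_pos_iff.2 hy)]
  ring_nf

theorem exists_eventually_le_norm_rpow_neg_mul {κ K η : ℝ} {f : E → ℝ} (hκ : κ ≤ K) (hη : 0 < η)
    (hf : Tendsto (fun y => ‖y‖ ^ (-κ) * f y) (𝓝[≠] 0) (𝓝 η)) :
    ∃ c > 0, ∀ᶠ y in 𝓝[≠] 0, c ≤ ‖y‖ ^ (-K) * f y := by
  rcases hκ.eq_or_lt with rfl | hκ
  · exact ⟨η / 2, half_pos hη, hf.eventually_const_le (half_lt_self hη)⟩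
  · exact ⟨1, one_pos, (tendsto_norm_rpow_neg_mul_atTop hκ hη hf).eventually_ge_atTop 1⟩

theorem eventually_mul_norm_sub_rpow_le {c K : ℝ} {φ : E → ℝ} {x : E} (hK : K ≠ 0)
    (hφ : 0 ≤ φ x) (hc : ∀ᶠ y in 𝓝[≠] 0, c ≤ ‖y‖ ^ (-K) * φ (x + y)) :
    ∀ᶠ y in 𝓝 x, c * ‖y - x‖ ^ K ≤ φ y := by
  have hsub : Tendsto (fun y => y - x) (𝓝 x) (𝓝 0) := by
    simpa using (continuous_sub_right x).tendsto x
  filter_upwards [hsub.eventually (eventually_nhdsWithin_iff.1 hc)] with y hy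
  rcases eq_or_ne y x with rfl | hne
  · simpa [Real.zero_rpow hK] using hφ
  · have hpos : 0 < ‖y - x‖ := norm_sub_pos_iff.2 hne
    have h := hy (sub_ne_zero.2 hne)
    rwa [add_sub_cancel, Real.rpow_neg hpos.le, inv_mul_eq_div,
      le_div_iff₀ (Real.rpow_pos_of_pos hpos K)] at h

end NormedAddCommGroup

theorem nonneg_of_pos_of_notMem_countable {E : Type*} [AddCommGroup E] [Module ℝ E]
    [TopologicalSpace E] [ContinuousAdd E] [ContinuousSMul ℝ E] [Nontrivial E] {φ : E → ℝ}
    {s : Set E} (hs : s.Countable) (hφ : Continuous φ) (hpos : ∀ y ∉ s, 0 < φ y) (y : E) :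
    0 ≤ φ y :=
  closure_minimal (fun _ h => (hpos _ h).le) (isClosed_le continuous_const hφ)
    (hs.dense_compl ℝ y)

section NormedSpace

variable {E : Type*} [NormedAddCommGroup E] [NormedSpace ℝ E]

theorem tendsto_rpow_smul_nhdsGT_zero {a : ℝ} (ha : 0 < a) {z : E} (hz : z ≠ 0) :
    Tendsto (fun s : ℝ => s ^ a • z) (𝓝[>] 0) (𝓝[≠] 0) := by
  refine tendsto_nhdsWithin_iff.2 ⟨?_, ?_⟩
  · simpa only [zero_smul] using (tendsto_rpow_nhdsGT_zero ha).smul_const z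
  · filter_upwards [self_mem_nhdsWithin] with s (hs : 0 < s)
    exact smul_ne_zero (Real.rpow_pos_of_pos hs a).ne' hz

theorem norm_rpow_inv_smul_rpow {K s : ℝ} (hK : K ≠ 0) (hs : 0 ≤ s) (z : E) :
    ‖s ^ K⁻¹ • z‖ ^ K = s * ‖z‖ ^ K := by
  rw [norm_smul, Real.norm_of_nonneg (by positivity), Real.mul_rpow (by positivity) (by positivity),
    Real.rpow_inv_rpow hs hK]

theorem norm_rpow_mul_norm_rpow_inv_smul_rpow_neg {K s : ℝ} (hK : K ≠ 0) (hs : 0 ≤ s) {z : E}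
    (hz : z ≠ 0) : ‖z‖ ^ K * ‖s ^ K⁻¹ • z‖ ^ (-K) = s⁻¹ := by
  have hz' : 0 < ‖z‖ ^ K := by positivity
  rw [Real.rpow_neg (norm_nonneg _), norm_rpow_inv_smul_rpow hK hs, mul_inv, mul_comm,
    inv_mul_cancel_right₀ hz'.ne']

theorem tendsto_div_rpow_inv_smul {K : ℝ} {f : E → ℝ} {z : E} {l l' : Filter ℝ}
    (hK : 0 < K) (hz : z ≠ 0) (hf : Tendsto (fun y => ‖y‖ ^ (-K) * f y) (𝓝[≠] 0) l)
    (hl : Tendsto (fun a => ‖z‖ ^ K * a) l l') :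
    Tendsto (fun s : ℝ => f (s ^ K⁻¹ • z) / s) (𝓝[>] 0) l' := by
  refine (hl.comp (hf.comp (tendsto_rpow_smul_nhdsGT_zero (inv_pos.2 hK) hz))).congr' ?_
  filter_upwards [self_mem_nhdsWithin] with s (hs : 0 < s)
  rw [Function.comp_apply, Function.comp_apply, ← mul_assoc,
    norm_rpow_mul_norm_rpow_inv_smul_rpow_neg hK.ne' hs.le hz, inv_mul_eq_div]

theorem norm_indicator_one_add_div_rpow_neg_le {S : Set E} {φ : E → ℝ} {x : E} {c p K s : ℝ}
    (hK : K ≠ 0) (hp : 0 ≤ p) (hc : 0 ≤ c) (hlow : ∀ y ∈ S, c * ‖y - x‖ ^ K ≤ φ y) (hs : 0 < s)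
    (z : E) :
    ‖S.indicator (fun y => (1 + φ y / s) ^ (-p)) (x + s ^ K⁻¹ • z)‖ ≤
      (1 + c * ‖z‖ ^ K) ^ (-p) := by
  by_cases hz : x + s ^ K⁻¹ • z ∈ S
  · have hle : c * ‖z‖ ^ K ≤ φ (x + s ^ K⁻¹ • z) / s := by
      have h := hlow _ hz
      rw [add_sub_cancel_left, norm_rpow_inv_smul_rpow hK hs.le] at h
      rw [le_div_iff₀ hs]
      linarith
    have h0 : 0 ≤ φ (x + s ^ K⁻¹ • z) / s := le_trans (by positivity) hle
    rw [Set.indicator_of_mem hz, Real.norm_of_nonneg (by positivity)]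
    exact Real.rpow_le_rpow_of_nonpos (by positivity) (by linarith) (neg_nonpos.2 hp)
  · rw [Set.indicator_of_notMem hz, norm_zero]
    positivity

end NormedSpace

section RescaledIntegral

variable {E : Type*} [NormedAddCommGroup E] [NormedSpace ℝ E] [MeasurableSpace E]

/-- The integral of `(s + φ) ^ (-p)` over `S`, normalised by the power of `s` that makes it
converge as `s → 0⁺` when `φ` vanishes to order `K`. With `s = -α * t` and `p = q / α`, the integral
is `‖U(t)‖_{L^q(S)} ^ q`. -/
noncomputable def rescaledIntegral (μ : Measure E) (p K : ℝ) (φ : E → ℝ) (S : Set E) (s : ℝ) : ℝ :=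
  s ^ (p - finrank ℝ E / K) * ∫ y in S, (s + φ y) ^ (-p) ∂μ

/-- The integral of the blow-up profile at a zero near which `φ` is asymptotic to
`η * ‖y - x‖ ^ K`; it is the contribution of that zero to the limit of `rescaledIntegral`. -/
noncomputable def profileIntegral (μ : Measure E) (p K η : ℝ) : ℝ :=
  ∫ z, (1 + η * ‖z‖ ^ K) ^ (-p) ∂μ

variable {μ : Measure E} {p K ν : ℝ} {φ : E → ℝ}

theorem rescaledIntegral_univ_eq_sum_add {ι : Type*} [Fintype ι] {S : ι → Set E} {s : ℝ}
    (hS : ∀ j, MeasurableSet (S j)) (hdisj : Pairwise (Function.onFun Disjoint S))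
    (hint : Integrable (fun y => (s + φ y) ^ (-p)) μ) :
    rescaledIntegral μ p K φ Set.univ s =
      ∑ j, rescaledIntegral μ p K φ (S j) s + rescaledIntegral μ p K φ (⋃ j, S j)ᶜ s := by
  simp only [rescaledIntegral]
  rw [setIntegral_univ, ← integral_add_compl (.iUnion hS) hint,
    integral_iUnion_fintype hS hdisj fun j => hint.integrableOn, mul_add, Finset.mul_sum]

theorem rpow_mul_toReal_eLpNorm_add_rpow_neg (hφ : Measurable φ) (hφ0 : ∀ y, 0 ≤ φ y) (α : ℝ)
    {q : ℝ≥0∞} (hq0 : q ≠ 0) (hq : q ≠ ∞) {s : ℝ} (hs : 0 < s) :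
    s ^ (1 / α - finrank ℝ E / (q.toReal * K)) *
        (eLpNorm (fun y => (s + φ y) ^ (-1 / α)) q μ).toReal =
      rescaledIntegral μ (q.toReal / α) K φ Set.univ s ^ q.toReal⁻¹ := by
  have hq' : q.toReal ≠ 0 := ENNReal.toReal_ne_zero.2 ⟨hq0, hq⟩
  have hφs (y : E) : 0 ≤ s + φ y := add_nonneg hs.le (hφ0 y)
  have hint : 0 ≤ ∫ y, (s + φ y) ^ (-(q.toReal / α)) ∂μ :=
    integral_nonneg fun y => Real.rpow_nonneg (hφs y) _
  rw [toReal_eLpNorm_rpow (by fun_prop) hφs _ hq0 hq, rescaledIntegral, setIntegral_univ,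
    Real.mul_rpow (by positivity) hint, ← Real.rpow_mul hs.le]
  congr 2
  · field_simp
  · congr! 3
    ring

variable [FiniteDimensional ℝ E] [BorelSpace E] [μ.IsAddHaarMeasure]

theorem integrableOn_rpow_neg_of_isBigO {T : Set E} (hT : IsClosed T) (hφ : Continuous φ)
    (hφ0 : ∀ y, 0 ≤ φ y) (hφT : ∀ y ∈ T, φ y ≠ 0) (hp : 0 ≤ p) (hpν : finrank ℝ E < p * ν)
    (hgrowth : (fun y => ‖y‖ ^ ν) =O[cocompact E] φ) :
    IntegrableOn (fun y => φ y ^ (-p)) T μ := by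
  have hnorm : ∀ᶠ y : E in cocompact E, 1 ≤ ‖y‖ :=
    (tendsto_norm_cocompact_atTop (E := E)).eventually_ge_atTop 1
  have hone_add : (fun y : E => 1 + ‖y‖) =O[cocompact E] fun y => ‖y‖ := by
    refine .of_bound 2 (hnorm.mono fun y hy => ?_)
    rw [norm_norm, Real.norm_of_nonneg (by positivity)]
    linarith
  have hdecay : (fun y => (φ y)⁻¹ ^ p) =O[cocompact E] fun y => ((1 + ‖y‖) ^ ν)⁻¹ ^ p := by
    have hν : 0 ≤ ν := (pos_of_mul_pos_right ((Nat.cast_nonneg _).trans_lt hpν) hp).le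
    have h := (hone_add.rpow hν (.of_forall fun y => norm_nonneg y)).trans hgrowth
    refine (h.inv_rev (.of_forall fun y hy => ?_)).rpow hp (.of_forall fun y => by positivity)
    exact absurd hy (by positivity)
  have hloc : LocallyIntegrable (fun y => φ y ^ (-p)) (μ.restrict T) := by
    rw [← locallyIntegrableOn_iff_locallyIntegrable_restrict hT]
    exact (hφ.continuousOn.rpow_const fun y hy => .inl (hφT y hy)).locallyIntegrableOn
      hT.measurableSet
  refine hloc.integrable_of_isBigO_cocompact (g := fun y => (1 + ‖y‖) ^ (-(p * ν))) ?_
    ((integrable_one_add_norm hpν).restrict.integrableAtFilter _)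
  refine hdecay.congr (fun y => ?_) (fun y => ?_)
  · rw [Real.inv_rpow (hφ0 y), Real.rpow_neg (hφ0 y)]
  · rw [← Real.rpow_neg (by positivity), ← Real.rpow_mul (by positivity)]
    ring_nf

theorem integrable_add_rpow_neg_of_isBigO (hφ : Continuous φ) (hφ0 : ∀ y, 0 ≤ φ y) (hp : 0 ≤ p)
    (hpν : finrank ℝ E < p * ν) (hgrowth : (fun y => ‖y‖ ^ ν) =O[cocompact E] φ) {s : ℝ}
    (hs : 0 < s) : Integrable (fun y => (s + φ y) ^ (-p)) μ := by
  rw [← integrableOn_univ]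
  refine integrableOn_rpow_neg_of_isBigO isClosed_univ (by fun_prop)
    (fun y => add_nonneg hs.le (hφ0 y)) (fun y _ => (add_pos_of_pos_of_nonneg hs (hφ0 y)).ne') hp
    hpν (hgrowth.trans (.of_bound' (.of_forall fun y => ?_)))
  rw [Real.norm_of_nonneg (hφ0 y), Real.norm_of_nonneg (add_nonneg hs.le (hφ0 y))]
  linarith

theorem integrable_one_add_mul_norm_rpow_neg {c : ℝ} (hc : 0 < c) (hK : 0 ≤ K) (hp : 0 ≤ p)
    (hpK : finrank ℝ E < p * K) : Integrable (fun z : E => (1 + c * ‖z‖ ^ K) ^ (-p)) μ :=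
  integrable_add_rpow_neg_of_isBigO (φ := fun z => c * ‖z‖ ^ K)
    (continuous_const.mul (continuous_norm.rpow_const fun _ => .inr hK))
    (fun z => by positivity) hp hpK
    ((isBigO_refl _ _).const_mul_right hc.ne') one_pos

theorem profileIntegral_pos {η : ℝ} (hη : 0 < η) (hK : 0 ≤ K) (hp : 0 ≤ p)
    (hpK : finrank ℝ E < p * K) : 0 < profileIntegral μ p K η := by
  have hpos (z : E) : 0 < (1 + η * ‖z‖ ^ K) ^ (-p) := by positivity
  refine (integral_pos_iff_support_of_nonneg (fun z => (hpos z).le)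
    (integrable_one_add_mul_norm_rpow_neg hη hK hp hpK)).2 ?_
  rw [Function.support_eq_univ fun z => (hpos z).ne']
  exact NeZero.pos _

theorem sum_profileIntegral_pos {ι : Type*} [Fintype ι] {k η : ι → ℝ} (hη : ∀ j, 0 < η j)
    (hkK : K ∈ Set.range k) (hK : 0 ≤ K) (hp : 0 ≤ p) (hpK : finrank ℝ E < p * K) :
    0 < ∑ j, if k j = K then profileIntegral μ p K (η j) else 0 := by
  have hpos (j : ι) := profileIntegral_pos (μ := μ) (hη j) hK hp hpK
  obtain ⟨j, hj⟩ := hkK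
  refine Finset.sum_pos' (fun i _ => ?_) ⟨j, Finset.mem_univ j, by simpa [hj] using hpos j⟩
  split_ifs
  exacts [(hpos i).le, le_rfl]

theorem rpow_mul_integral_eq_integral_rpow_mul_comp (f : E → ℝ) (x : E) {s : ℝ} (hs : 0 < s) :
    s ^ (p - finrank ℝ E / K) * ∫ y, f y ∂μ = ∫ z, s ^ p * f (x + s ^ K⁻¹ • z) ∂μ := by
  rw [integral_const_mul, Measure.integral_comp_smul_of_nonneg μ (fun y => f (x + y)) _
    (hR := by positivity), integral_add_left_eq_self, smul_eq_mul, ← mul_assoc, Real.rpow_sub hs,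
    ← Real.rpow_mul_natCast hs.le, div_eq_mul_inv, mul_comm K⁻¹, div_eq_mul_inv]

theorem rescaledIntegral_eq_integral {S : Set E} (hS : MeasurableSet S) (hφ0 : ∀ y ∈ S, 0 ≤ φ y)
    (x : E) {s : ℝ} (hs : 0 < s) :
    rescaledIntegral μ p K φ S s =
      ∫ z, S.indicator (fun y => (1 + φ y / s) ^ (-p)) (x + s ^ K⁻¹ • z) ∂μ := by
  rw [rescaledIntegral, ← integral_indicator hS, rpow_mul_integral_eq_integral_rpow_mul_comp _ x hs]
  refine integral_congr_ae (.of_forall fun z => ?_)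
  by_cases hz : x + s ^ K⁻¹ • z ∈ S
  · have h0 : 0 ≤ φ (x + s ^ K⁻¹ • z) := hφ0 _ hz
    simp only [Set.indicator_of_mem hz]
    rw [← neg_neg p, Real.rpow_neg hs.le, neg_neg, ← Real.inv_rpow hs.le,
      ← Real.mul_rpow (by positivity) (by positivity)]
    congr 1
    field_simp
  · simp only [Set.indicator_of_notMem hz, mul_zero]

theorem tendsto_rescaledIntegral {S : Set E} {x : E} {c : ℝ} {L : E → ℝ} (hS : MeasurableSet S)
    (hSx : S ∈ 𝓝 x) (hφ : Measurable φ) (hK : 0 < K) (hp : 0 ≤ p) (hpK : finrank ℝ E < p * K)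
    (hc : 0 < c) (hlow : ∀ y ∈ S, c * ‖y - x‖ ^ K ≤ φ y)
    (hlim : ∀ᵐ z ∂μ, Tendsto (fun s : ℝ => (1 + φ (x + s ^ K⁻¹ • z) / s) ^ (-p))
      (𝓝[>] 0) (𝓝 (L z))) :
    Tendsto (rescaledIntegral μ p K φ S) (𝓝[>] 0) (𝓝 (∫ z, L z ∂μ)) := by
  have hDCT : Tendsto (fun s : ℝ =>
      ∫ z, S.indicator (fun y => (1 + φ y / s) ^ (-p)) (x + s ^ K⁻¹ • z) ∂μ)
      (𝓝[>] 0) (𝓝 (∫ z, L z ∂μ)) := by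
    refine tendsto_integral_filter_of_dominated_convergence _ ?_ ?_
      (integrable_one_add_mul_norm_rpow_neg hc hK.le hp hpK) ?_
    · refine .of_forall fun s => Measurable.aestronglyMeasurable ?_
      have hmeas : Measurable fun y : E => (1 + φ y / s) ^ (-p) := by fun_prop
      exact (hmeas.indicator hS).comp (by fun_prop)
    · filter_upwards [self_mem_nhdsWithin] with s (hs : 0 < s)
      exact .of_forall (norm_indicator_one_add_div_rpow_neg_le hK.ne' hp hc.le hlow hs)
    · filter_upwards [hlim] with z hz
      refine hz.congr' ?_
      have hx : Tendsto (fun s : ℝ => x + s ^ K⁻¹ • z) (𝓝[>] 0) (𝓝 x) := by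
        simpa only [zero_smul, add_zero] using
          ((tendsto_rpow_nhdsGT_zero (inv_pos.2 hK)).smul_const z).const_add x
      filter_upwards [hx hSx] with s (hs : x + s ^ K⁻¹ • z ∈ S)
      exact (Set.indicator_of_mem (f := fun y => (1 + φ y / s) ^ (-p)) hs).symm
  refine hDCT.congr' ?_
  filter_upwards [self_mem_nhdsWithin] with s hs
  have hφ0 (y) (hy : y ∈ S) : 0 ≤ φ y := le_trans (by positivity) (hlow y hy)
  exact (rescaledIntegral_eq_integral hS hφ0 x hs).symm

theorem tendsto_rescaledIntegral_of_tendsto [Nontrivial E] {S : Set E} {x : E} {c κ η : ℝ}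
    (hS : MeasurableSet S) (hSx : S ∈ 𝓝 x) (hφ : Measurable φ) (hK : 0 < K) (hp : 0 < p)
    (hpK : finrank ℝ E < p * K) (hc : 0 < c) (hlow : ∀ y ∈ S, c * ‖y - x‖ ^ K ≤ φ y)
    (hκ : κ ≤ K) (hη : 0 < η)
    (hlim : Tendsto (fun y => ‖y‖ ^ (-κ) * φ (x + y)) (𝓝[≠] 0) (𝓝 η)) :
    Tendsto (rescaledIntegral μ p K φ S) (𝓝[>] 0)
      (𝓝 (if κ = K then profileIntegral μ p K η else 0)) := by
  have hz0 : ∀ᵐ z ∂μ, z ≠ 0 := Measure.ae_ne μ 0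
  rcases hκ.eq_or_lt with rfl | hκ
  · rw [if_pos rfl]
    refine tendsto_rescaledIntegral hS hSx hφ hK hp.le hpK hc hlow (hz0.mono fun z hz => ?_)
    have h := tendsto_div_rpow_inv_smul hK hz hlim (tendsto_id.const_mul (‖z‖ ^ κ))
    rw [mul_comm η]
    exact (h.const_add 1).rpow_const (.inl (by positivity))
  · suffices Tendsto (rescaledIntegral μ p K φ S) (𝓝[>] 0) (𝓝 (∫ _, 0 ∂μ)) by
      simpa only [if_neg hκ.ne, integral_zero] using this
    refine tendsto_rescaledIntegral hS hSx hφ hK hp.le hpK hc hlow (hz0.mono fun z hz => ?_)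
    have h := tendsto_div_rpow_inv_smul hK hz (tendsto_norm_rpow_neg_mul_atTop hκ hη hlim)
      (tendsto_id.const_mul_atTop (by positivity))
    exact (tendsto_rpow_neg_atTop hp).comp (tendsto_atTop_add_const_left _ 1 h)

theorem tendsto_rescaledIntegral_univ [Nontrivial E] {ι : Type*} [Fintype ι] {x : ι → E}
    (hx : Function.Injective x) (hφ : Continuous φ)
    (hφx : ∀ y ∉ Set.range x, 0 < φ y) {k η : ι → ℝ} (hη : ∀ j, 0 < η j)
    (hlim : ∀ j, Tendsto (fun y => ‖y‖ ^ (-k j) * φ (x j + y)) (𝓝[≠] 0) (𝓝 (η j)))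
    (hK : 0 < K) (hkK : ∀ j, k j ≤ K) (hp : 0 < p) (hpK : finrank ℝ E < p * K)
    (hpν : finrank ℝ E < p * ν) (hgrowth : (fun y => ‖y‖ ^ ν) =O[cocompact E] φ) :
    Tendsto (rescaledIntegral μ p K φ Set.univ) (𝓝[>] 0)
      (𝓝 (∑ j, if k j = K then profileIntegral μ p K (η j) else 0)) := by
  have hφ0 := nonneg_of_pos_of_notMem_countable (Set.countable_range x) hφ hφx
  choose c hc hlow using fun j => exists_eventually_le_norm_rpow_neg_mul (hkK j) (hη j) (hlim j)
  obtain ⟨S, hS, hdisj⟩ := exists_isOpen_pairwise_disjoint_subset hx fun j =>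
    eventually_mul_norm_sub_rpow_le hK.ne' (hφ0 (x j)) (hlow j)
  choose hSo hxS hSlow using hS
  have hnear (j : ι) := tendsto_rescaledIntegral_of_tendsto (μ := μ) (hSo j).measurableSet
    ((hSo j).mem_nhds (hxS j)) hφ.measurable hK hp hpK (hc j) (fun y hy => hSlow j hy) (hkK j)
    (hη j) (hlim j)
  have hTc : IsClosed (⋃ j, S j)ᶜ := (isOpen_iUnion hSo).isClosed_compl
  have hTpos (y) (hy : y ∈ (⋃ j, S j)ᶜ) : 0 < φ y := by
    refine hφx y ?_
    rintro ⟨j, rfl⟩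
    exact hy (Set.mem_iUnion_of_mem j (hxS j))
  have hfar : Tendsto (rescaledIntegral μ p K φ (⋃ j, S j)ᶜ) (𝓝[>] 0) (𝓝 0) :=
    tendsto_rpow_mul_setIntegral_add_rpow_neg hTc.measurableSet hTpos hp.le
      (sub_pos.2 ((div_lt_iff₀ hK).2 hpK))
      (integrableOn_rpow_neg_of_isBigO hTc hφ hφ0 (fun y hy => (hTpos y hy).ne') hp.le hpν hgrowth)
  rw [← add_zero (∑ j, _)]
  refine ((tendsto_finsetSum _ fun j _ => hnear j).add hfar).congr' ?_
  filter_upwards [self_mem_nhdsWithin] with s hs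
  exact (rescaledIntegral_univ_eq_sum_add (fun j => (hSo j).measurableSet) hdisj
    (integrable_add_rpow_neg_of_isBigO hφ hφ0 hp.le hpν hgrowth hs)).symm

end RescaledIntegral

theorem U_L2_blowup_rate_general {E : Type*} [NormedAddCommGroup E] [NormedSpace ℝ E]
    [FiniteDimensional ℝ E] [Nontrivial E] [MeasurableSpace E] [BorelSpace E] (μ : Measure E)
    [μ.IsAddHaarMeasure] {α : ℝ} (hα : 0 < α) {q : ℝ≥0∞} (hq0 : q ≠ 0) (hq : q ≠ ∞)
    {ι : Type*} [Finite ι] {x : ι → E} (hx : Function.Injective x) {k η : ι → ℝ}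
    (hη : ∀ j, 0 < η j) {K ν : ℝ} (hkK : IsGreatest (Set.range k) K)
    (hK : finrank ℝ E * α / q.toReal < K) (hν : finrank ℝ E * α / q.toReal < ν)
    {φ : E → ℝ} (hφ : Continuous φ) (hφx : ∀ y ∉ Set.range x, 0 < φ y)
    (hlim : ∀ j, Tendsto (fun y => ‖y‖ ^ (-k j) * φ (x j + y)) (𝓝[≠] 0) (𝓝 (η j)))
    (hgrowth : (fun y => ‖y‖ ^ ν) =O[cocompact E] φ) :
    ∃ a > (0 : ℝ), Tendsto (fun t : ℝ =>
        (-t) ^ (1 / α - finrank ℝ E / (q.toReal * K)) *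
        (eLpNorm (fun y => (-α * t + φ y) ^ (-1 / α)) q μ).toReal)
      (𝓝[<] 0) (𝓝 a) := by
  have := Fintype.ofFinite ι
  have hq' : 0 < q.toReal := ENNReal.toReal_pos hq0 hq
  have hK0 : 0 < K := lt_of_le_of_lt (by positivity) hK
  have hp : 0 < q.toReal / α := by positivity
  have hp_mul {κ : ℝ} (h : finrank ℝ E * α / q.toReal < κ) : finrank ℝ E < q.toReal / α * κ := by
    rw [div_lt_iff₀ hq'] at h
    rw [div_mul_eq_mul_div, lt_div_iff₀ hα]
    linarith
  have hφ0 := nonneg_of_pos_of_notMem_countable (Set.countable_range x) hφ hφx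
  set A : ℝ := ∑ j, if k j = K then profileIntegral μ (q.toReal / α) K (η j) else 0
  have hA : 0 < A := sum_profileIntegral_pos hη hkK.1 hK0.le hp.le (hp_mul hK)
  have hmain := (tendsto_rescaledIntegral_univ (μ := μ) hx hφ hφx hη hlim hK0
    (fun j => hkK.2 ⟨j, rfl⟩) hp (hp_mul hK) (hp_mul hν) hgrowth).comp
      (tendsto_const_mul_nhdsLT_zero_nhdsGT_zero (neg_neg_of_pos hα))
  set e : ℝ := 1 / α - finrank ℝ E / (q.toReal * K)
  refine ⟨(α ^ e)⁻¹ * A ^ q.toReal⁻¹, by positivity,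
    ((hmain.rpow_const (.inl hA.ne')).const_mul (α ^ e)⁻¹).congr' ?_⟩
  filter_upwards [self_mem_nhdsWithin] with t (ht : t < 0)
  have hs : 0 < -α * t := mul_pos_of_neg_of_neg (neg_neg_of_pos hα) ht
  rw [Function.comp_apply, ← rpow_mul_toReal_eLpNorm_add_rpow_neg hφ.measurable hφ0 α hq0 hq hs,
    neg_mul_comm, Real.mul_rpow hα.le (by linarith), ← mul_assoc, ← mul_assoc,
    inv_mul_cancel₀ (by positivity), one_mul]

theorem U_L2_blowup_rate (N : ℕ) (hN : 1 ≤ N) (α : ℝ) (hα : 0 < α)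
    (J : ℕ) (hJ : 1 ≤ J) (ρ ν : ℝ) (hρ : 0 < ρ) (hν : (N : ℝ) * α / 2 < ν)
    (x : Fin J → EuclideanSpace ℝ (Fin N))
    (hsep : ∀ j ℓ : Fin J, j ≠ ℓ → 2 * ρ ≤ ‖x j - x ℓ‖)
    (k : Fin J → ℝ) (hkmono : Monotone k)
    (hk1 : 10 < k ⟨0, hJ⟩) (hkJ : (N : ℝ) * α / 2 < k ⟨J - 1, Nat.sub_lt hJ Nat.one_pos⟩)
    (η : Fin J → (m : ℕ) → (Fin m → Fin N) → ℝ)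
    (hη : ∀ (j : Fin J) (m : ℕ) (v : Fin m → Fin N), m ≤ 3 → 0 < η j m v)
    (φ : EuclideanSpace ℝ (Fin N) → ℝ) (hφ : ContDiff ℝ 3 φ)
    (hφpos : ∀ y : EuclideanSpace ℝ (Fin N), (∀ j : Fin J, y ≠ x j) → 0 < φ y)
    (hφloc : ∀ (j : Fin J) (m : ℕ), m ≤ 3 → ∀ v : Fin m → Fin N,
      Tendsto (fun y : EuclideanSpace ℝ (Fin N) =>
          ‖y‖ ^ (-(k j) + (m : ℝ)) *
            |iteratedFDeriv ℝ m φ (x j + y) (fun i => EuclideanSpace.single (v i) 1)|)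
        (nhdsWithin 0 {0}ᶜ) (nhds (η j m v)))
    (hφinf : ∃ c > (0 : ℝ), ∃ R : ℝ, ∀ y : EuclideanSpace ℝ (Fin N),
      R ≤ ‖y‖ → c ≤ ‖y‖ ^ (-ν) * φ y)
    (hφsup : ∀ (m : ℕ), 1 ≤ m → m ≤ 3 → ∀ v : Fin m → Fin N,
      ∃ C R : ℝ, ∀ y : EuclideanSpace ℝ (Fin N), R ≤ ‖y‖ →
        ‖y‖ ^ (-ν) * |iteratedFDeriv ℝ m φ y (fun i => EuclideanSpace.single (v i) 1)| ≤ C) :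
    ∃ a > (0 : ℝ), Tendsto (fun t : ℝ =>
        (-t) ^ (1 / α - (N : ℝ) / (2 * k ⟨J - 1, Nat.sub_lt hJ Nat.one_pos⟩)) *
        (eLpNorm (fun y : EuclideanSpace ℝ (Fin N) => (-α * t + φ y) ^ (-1 / α)) 2
          volume).toReal)
      (nhdsWithin 0 (Set.Iio 0)) (nhds a) := by
  have : Nonempty (Fin N) := ⟨⟨0, hN⟩⟩
  have hx : Function.Injective x := fun i j hij => by
    by_contra hne
    have h := hsep i j hne
    rw [hij, sub_self, norm_zero] at h
    linarith
  have hkK : IsGreatest (Set.range k) (k ⟨J - 1, Nat.sub_lt hJ Nat.one_pos⟩) := by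
    refine ⟨⟨_, rfl⟩, ?_⟩
    rintro _ ⟨j, rfl⟩
    exact hkmono (Fin.le_def.2 (Nat.le_sub_one_of_lt j.2))
  have hφx (y) (hy : y ∉ Set.range x) : 0 < φ y := hφpos y fun j hj => hy ⟨j, hj.symm⟩
  have hφ0 := nonneg_of_pos_of_notMem_countable (Set.countable_range x) hφ.continuous hφx
  have hlim (j : Fin J) : Tendsto (fun y => ‖y‖ ^ (-k j) * φ (x j + y)) (𝓝[≠] 0)
      (𝓝 (η j 0 Fin.elim0)) := by
    simpa [abs_of_nonneg (hφ0 _)] using hφloc j 0 (by norm_num) Fin.elim0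
  simpa using U_L2_blowup_rate_general volume hα two_ne_zero ENNReal.ofNat_ne_top hx
    (fun j => hη j 0 Fin.elim0 (by norm_num)) hkK (by simpa using hkJ) (by simpa using hν)
    hφ.continuous hφx hlim (isBigO_norm_rpow_of_le_norm_rpow_neg_mul hφinf)
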